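/- arXiv:math/0408090 — 4 statements merged into one kernel-verified Lean document; each statement's English description precedes it below -/
import Mathlib

section
/- For every ρ > 0 there is a Borel subset Ω_ρ of X with μ(Ω_ρ) > 1 - ρ such that: for every ε > 0 and every compact subset K of X with μ(K) > 1 - ε, there exists L₀ > 0 such that for all ω ∈ Ω_ρ and all L > L₀, the Lebesgue measure of { s ∈ [-L, L] : dist(φ_s(ω), K) < ε } is greater than (1 - ε)·2L. -/
open MeasureTheory

/-!
Replacing `K` by its open `ε`-neighbourhood, it is enough to control the orbit averages of the
indicators of one countable family of open sets which approximates every open set from inside in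
measure. For each member of the family the pointwise ergodic theorem, derived from Hopf's maximal
inequality, gives almost everywhere convergence, and Egorov's theorem makes the convergence uniform
off a set of small measure; countably many such exceptional sets are then discarded at once.
-/

open Filter Topology

section MaximalInequality

variable {X : Type*} {T : X → X} {g : X → ℝ}

/-- The maximum of `0` and of the first `n` Birkhoff sums of `g` along `T`, encoded by the recursion
`Mₙ₊₁ = max 0 (g + Mₙ ∘ T)`; it is the auxiliary function of the maximal inequality. -/
noncomputable def birkhoffMax (T : X → X) (g : X → ℝ) : ℕ → X → ℝ
  | 0, _ => 0
  | n + 1, x => max 0 (g x + birkhoffMax T g n (T x))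

lemma birkhoffMax_nonneg (n : ℕ) (x : X) : 0 ≤ birkhoffMax T g n x := by
  cases n with
  | zero => exact le_rfl
  | succ n => exact le_max_left _ _

lemma birkhoffMax_le_succ (n : ℕ) (x : X) :
    birkhoffMax T g n x ≤ birkhoffMax T g (n + 1) x := by
  induction n generalizing x with
  | zero => exact birkhoffMax_nonneg 1 x
  | succ n ih => exact max_le_max le_rfl (by gcongr; exact ih (T x))

lemma birkhoffSum_le_birkhoffMax (n : ℕ) (x : X) :
    birkhoffSum T g n x ≤ birkhoffMax T g n x := by
  induction n generalizing x with
  | zero => exact (birkhoffSum_zero T g x).le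
  | succ n ih =>
    rw [birkhoffSum_succ']
    exact le_trans (by gcongr; exact ih (T x)) (le_max_right _ _)

lemma birkhoffMax_sub_comp_le_indicator (n : ℕ) (x : X) :
    birkhoffMax T g n x - birkhoffMax T g n (T x) ≤
      {y | 0 < birkhoffMax T g n y}.indicator g x := by
  by_cases hx : 0 < birkhoffMax T g n x
  · rw [Set.indicator_of_mem (by exact hx), sub_le_iff_le_add]
    cases n with
    | zero => exact absurd hx (lt_irrefl 0)
    | succ n =>
      have hpos : 0 < g x + birkhoffMax T g n (T x) := (lt_max_iff.1 hx).resolve_left (lt_irrefl 0)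
      calc birkhoffMax T g (n + 1) x = g x + birkhoffMax T g n (T x) := max_eq_right hpos.le
        _ ≤ g x + birkhoffMax T g (n + 1) (T x) := by gcongr; exact birkhoffMax_le_succ n (T x)
  · rw [Set.indicator_of_notMem (by exact hx)]
    linarith [birkhoffMax_nonneg (T := T) (g := g) n (T x)]

variable [MeasurableSpace X] {μ : Measure X}

lemma integrable_birkhoffMax (hT : MeasurePreserving T μ μ) (hg : Integrable g μ) (n : ℕ) :
    Integrable (birkhoffMax T g n) μ := by
  induction n with
  | zero => exact integrable_zero X ℝ μ
  | succ n ih =>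
    exact (integrable_zero X ℝ μ).sup (hg.add (hT.integrable_comp_of_integrable ih))

lemma nullMeasurableSet_birkhoffMax_pos (hT : MeasurePreserving T μ μ) (hg : Integrable g μ)
    (n : ℕ) : NullMeasurableSet {x | 0 < birkhoffMax T g n x} μ :=
  nullMeasurableSet_lt aemeasurable_const (integrable_birkhoffMax hT hg n).aemeasurable

lemma setIntegral_birkhoffMax_pos_nonneg (hT : MeasurePreserving T μ μ) (hg : Integrable g μ)
    (n : ℕ) : 0 ≤ ∫ x in {x | 0 < birkhoffMax T g n x}, g x ∂μ := by
  have hM := integrable_birkhoffMax hT hg n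
  have hMT : Integrable (fun x => birkhoffMax T g n (T x)) μ := hT.integrable_comp_of_integrable hM
  have hinv : ∫ x, birkhoffMax T g n (T x) ∂μ = ∫ x, birkhoffMax T g n x ∂μ := by
    rw [← integral_map hT.aemeasurable (hT.map_eq.symm ▸ hM.aestronglyMeasurable), hT.map_eq]
  have hset := nullMeasurableSet_birkhoffMax_pos hT hg n
  calc 0 = ∫ x, (birkhoffMax T g n x - birkhoffMax T g n (T x)) ∂μ := by
        rw [integral_sub hM hMT, hinv, sub_self]
    _ ≤ ∫ x, {y | 0 < birkhoffMax T g n y}.indicator g x ∂μ :=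
        integral_mono (hM.sub hMT) (hg.indicator₀ hset) (birkhoffMax_sub_comp_le_indicator n)
    _ = ∫ x in {x | 0 < birkhoffMax T g n x}, g x ∂μ := integral_indicator₀ hset

theorem integral_nonneg_of_ae_exists_birkhoffSum_pos (hT : MeasurePreserving T μ μ)
    (hg : Integrable g μ) (hpos : ∀ᵐ x ∂μ, ∃ n, 0 < birkhoffSum T g n x) :
    0 ≤ ∫ x, g x ∂μ := by
  have hmono : Monotone fun n => {x | 0 < birkhoffMax T g n x} :=
    monotone_nat_of_le_succ fun n x hx => lt_of_lt_of_le hx (birkhoffMax_le_succ n x)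
  have hlim := tendsto_setIntegral_of_monotone₀ (nullMeasurableSet_birkhoffMax_pos hT hg) hmono
    hg.integrableOn
  have hcover : (⋃ n, {x | 0 < birkhoffMax T g n x} : Set X) =ᵐ[μ] Set.univ := by
    rw [eventuallyEq_univ]
    filter_upwards [hpos] with x ⟨n, hn⟩
    exact Set.mem_iUnion.2 ⟨n, hn.trans_le (birkhoffSum_le_birkhoffMax n x)⟩
  rw [setIntegral_congr_set hcover, setIntegral_univ] at hlim
  exact ge_of_tendsto' hlim (setIntegral_birkhoffMax_pos_nonneg hT hg)

end MaximalInequality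

section IntervalAverage

lemma norm_intervalAverage_le_of_norm_le_const {E : Type*} [NormedAddCommGroup E]
    [NormedSpace ℝ E] {g : ℝ → E} {C : ℝ} (hC : ∀ s, ‖g s‖ ≤ C) (a b : ℝ) :
    ‖⨍ s in a..b, g s‖ ≤ C := by
  have hC0 : 0 ≤ C := (norm_nonneg _).trans (hC 0)
  rw [interval_average_eq, norm_smul, norm_inv, Real.norm_eq_abs]
  refine inv_mul_le_of_le_mul₀ (abs_nonneg _) hC0 ?_
  rw [mul_comm]
  exact intervalIntegral.norm_integral_le_of_norm_le_const fun s _ => hC s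

lemma intervalAverage_indicator_one {A : Set ℝ} (hA : MeasurableSet A) {a b : ℝ} (hab : a ≤ b) :
    ⨍ s in a..b, A.indicator (fun _ => (1 : ℝ)) s = volume.real (A ∩ Set.Ioc a b) / (b - a) := by
  rw [interval_average_eq_div, intervalIntegral.integral_of_le hab, integral_indicator_const _ hA,
    smul_eq_mul, mul_one, measureReal_restrict_apply hA]

variable {g : ℝ → ℝ}

lemma intervalAverage_neg_self (hg : ∀ a b, IntervalIntegrable g volume a b) (r : ℝ) :
    ⨍ s in (-r)..r, g s = ((⨍ s in 0..r, g s) + ⨍ s in 0..r, g (-s)) / 2 := by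
  have hneg : ∫ s in 0..r, g (-s) = ∫ s in (-r)..0, g s := by
    rw [intervalIntegral.integral_comp_neg, neg_zero]
  simp only [interval_average_eq, hneg, smul_eq_mul, sub_zero, sub_neg_eq_add, ← two_mul, mul_inv]
  rw [← intervalIntegral.integral_add_adjacent_intervals (hg (-r) 0) (hg 0 r)]
  ring

lemma abs_intervalAverage_sub_intervalAverage_le (hg : ∀ a b, IntervalIntegrable g volume a b)
    {C : ℝ} (hC : ∀ s, |g s| ≤ C) {r L : ℝ} (hrL : r ≤ L) (hL : 0 < L) :
    |(⨍ s in (-L)..L, g s) - ⨍ s in (-r)..r, g s| ≤ 2 * C * (L - r) / L := by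
  have hint (t : ℝ) : ∫ s in (-t)..t, g s = 2 * t * ⨍ s in (-t)..t, g s := by
    rcases eq_or_ne t 0 with rfl | ht
    · simp
    · rw [interval_average_eq_div]; field_simp; ring
  have hsplit : 2 * L * ((⨍ s in (-L)..L, g s) - ⨍ s in (-r)..r, g s) =
      (∫ s in (-L)..(-r), g s) + (∫ s in r..L, g s) - 2 * (L - r) * ⨍ s in (-r)..r, g s := by
    have hadj := intervalIntegral.integral_add_adjacent_intervals (hg (-L) (-r)) (hg (-r) r)
    have hadj' := intervalIntegral.integral_add_adjacent_intervals (hg (-L) r) (hg r L)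
    linear_combination -hadj - hadj' - hint L + hint r
  have hpiece (a b : ℝ) : |∫ s in a..b, g s| ≤ C * |b - a| :=
    intervalIntegral.norm_integral_le_of_norm_le_const (f := g) fun s _ => hC s
  have hleft := hpiece (-L) (-r)
  have hright := hpiece r L
  rw [abs_of_nonneg (by linarith : 0 ≤ -r - -L)] at hleft
  rw [abs_of_nonneg (sub_nonneg.2 hrL)] at hright
  have hinner : |2 * (L - r) * ⨍ s in (-r)..r, g s| ≤ 2 * (L - r) * C := by
    rw [abs_mul, abs_of_nonneg (by linarith : 0 ≤ 2 * (L - r))]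
    gcongr
    exact norm_intervalAverage_le_of_norm_le_const (g := g) hC _ _
  have hscaled : 2 * L * |(⨍ s in (-L)..L, g s) - ⨍ s in (-r)..r, g s| ≤ 4 * C * (L - r) := by
    rw [← abs_of_pos (by linarith : 0 < 2 * L), ← abs_mul, hsplit]
    refine (abs_sub _ _).trans ?_
    linarith [abs_add_le (∫ s in (-L)..(-r), g s) (∫ s in r..L, g s)]
  rw [le_div_iff₀ hL]
  linarith

lemma tendsto_intervalAverage_comp_add_right_sub (hg : ∀ a b, IntervalIntegrable g volume a b)
    {C : ℝ} (hC : ∀ s, |g s| ≤ C) (t : ℝ) :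
    Tendsto (fun r : ℝ => (⨍ s in 0..r, g (s + t)) - ⨍ s in 0..r, g s) atTop (𝓝 0) := by
  have hpiece (a b : ℝ) : |∫ s in a..b, g s| ≤ C * |b - a| :=
    intervalIntegral.norm_integral_le_of_norm_le_const (f := g) fun s _ => hC s
  have hbound (r : ℝ) : |(∫ s in 0..r, g (s + t)) - ∫ s in 0..r, g s| ≤ 2 * C * |t| := by
    rw [intervalIntegral.integral_comp_add_right, zero_add,
      intervalIntegral.integral_interval_sub_interval_comm' (hg _ _) (hg _ _) (hg _ _)]
    have hright := hpiece r (r + t)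
    have hleft := hpiece 0 t
    rw [add_sub_cancel_left] at hright
    rw [sub_zero] at hleft
    refine (abs_sub _ _).trans ?_
    linarith
  refine squeeze_zero_norm' ?_ ((tendsto_const_nhds (x := 2 * C * |t|)).div_atTop tendsto_id)
  filter_upwards [eventually_gt_atTop 0] with r hr
  rw [interval_average_eq_div, interval_average_eq_div, ← sub_div, sub_zero, Real.norm_eq_abs,
    abs_div, abs_of_pos hr]
  exact div_le_div_of_nonneg_right (hbound r) hr.le

lemma tendstoUniformlyOn_intervalAverage_of_nat {α : Type*} {g : α → ℝ → ℝ} {m : α → ℝ} {S : Set α}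
    (hg : ∀ x a b, IntervalIntegrable (g x) volume a b) {C : ℝ} (hC : ∀ x s, |g x s| ≤ C)
    (h : TendstoUniformlyOn (fun (n : ℕ) x => ⨍ s in (-n : ℝ)..n, g x s) m atTop S) :
    TendstoUniformlyOn (fun (L : ℝ) x => ⨍ s in (-L)..L, g x s) m atTop S := by
  rw [Metric.tendstoUniformlyOn_iff] at h ⊢
  intro ε hε
  have hfloor := tendsto_nat_floor_atTop (α := ℝ).eventually (h (ε / 2) (half_pos hε))
  have herror : ∀ᶠ L : ℝ in atTop, 2 * |C| / L < ε / 2 :=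
    (tendsto_const_nhds.div_atTop tendsto_id).eventually_lt_const (half_pos hε)
  filter_upwards [hfloor, herror, eventually_gt_atTop 0] with L hLfloor hLerror hL x hx
  have hcompare : |(⨍ s in (-L)..L, g x s) - ⨍ s in (-⌊L⌋₊ : ℝ)..⌊L⌋₊, g x s| ≤ 2 * |C| / L := by
    have hfract : L - ⌊L⌋₊ ≤ 1 := by linarith [Nat.lt_floor_add_one L]
    calc |(⨍ s in (-L)..L, g x s) - ⨍ s in (-⌊L⌋₊ : ℝ)..⌊L⌋₊, g x s|
        ≤ 2 * |C| * (L - ⌊L⌋₊) / L :=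
          abs_intervalAverage_sub_intervalAverage_le (hg x)
            (fun s => (hC x s).trans (le_abs_self C)) (Nat.floor_le hL.le) hL
      _ ≤ 2 * |C| / L :=
          div_le_div_of_nonneg_right (mul_le_of_le_one_right (by positivity) hfract) hL.le
  calc dist (m x) (⨍ s in (-L)..L, g x s)
      ≤ dist (m x) (⨍ s in (-⌊L⌋₊ : ℝ)..⌊L⌋₊, g x s) +
          dist (⨍ s in (-L)..L, g x s) (⨍ s in (-⌊L⌋₊ : ℝ)..⌊L⌋₊, g x s) :=
        dist_triangle_right _ _ _
    _ < ε / 2 + ε / 2 := add_lt_add (hLfloor x hx) (hcompare.trans_lt hLerror)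
    _ = ε := add_halves ε

end IntervalAverage

section OrbitAverage

lemma limsup_eq_limsup_of_tendsto_sub {ι : Type*} {l : Filter ι} [l.NeBot] {u v : ι → ℝ} {C : ℝ}
    (hu : ∀ i, |u i| ≤ C) (hv : ∀ i, |v i| ≤ C) (h : Tendsto (fun i => u i - v i) l (𝓝 0)) :
    limsup u l = limsup v l := by
  have key {u v : ι → ℝ} (hv : ∀ i, |v i| ≤ C) (h : Tendsto (fun i => u i - v i) l (𝓝 0)) :
      limsup u l ≤ limsup v l := by
    have hadd := limsup_add_le (u := v) (v := fun i => u i - v i)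
      (isBoundedUnder_of ⟨-C, fun i => (abs_le.1 (hv i)).1⟩)
      (isBoundedUnder_of ⟨C, fun i => (abs_le.1 (hv i)).2⟩)
      h.isCoboundedUnder_le h.isBoundedUnder_le
    rwa [h.limsup_eq, add_zero, show v + (fun i => u i - v i) = u from funext fun i => by simp]
      at hadd
  refine le_antisymm (key hv h) (key hu ?_)
  simpa using h.neg

variable {X : Type*} {φ : ℝ → X → X} {f : X → ℝ}

lemma abs_intervalAverage_orbit_le {C : ℝ} (hC : ∀ x, |f x| ≤ C) (x : X) (a b : ℝ) :
    |⨍ s in a..b, f (φ s x)| ≤ C :=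
  norm_intervalAverage_le_of_norm_le_const (g := fun s => f (φ s x)) (fun s => hC (φ s x)) a b

lemma birkhoffSum_intervalIntegral_orbit (hadd : ∀ s t, φ (s + t) = φ s ∘ φ t)
    (hint : ∀ x a b, IntervalIntegrable (fun s => f (φ s x)) volume a b) (n : ℕ) (x : X) :
    birkhoffSum (φ 1) (fun y => ∫ s in 0..1, f (φ s y)) n x = ∫ s in 0..n, f (φ s x) := by
  induction n generalizing x with
  | zero => simp
  | succ n ih =>
    have hshift : ∫ s in 0..n, f (φ s (φ 1 x)) = ∫ s in 1..(n + 1 : ℝ), f (φ s x) := by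
      simp only [← Function.comp_apply (f := φ _), ← hadd]
      rw [intervalIntegral.integral_comp_add_right (fun s => f (φ s x)), zero_add]
    rw [birkhoffSum_succ', ih, hshift, Nat.cast_succ]
    exact intervalIntegral.integral_add_adjacent_intervals (hint x _ _) (hint x _ _)

variable [MeasurableSpace X] {C : ℝ} {μ : Measure X}

lemma measurable_intervalAverage_orbit (hφ : Measurable fun p : ℝ × X => φ p.1 p.2)
    (hf : Measurable f) (a b : ℝ) : Measurable fun x => ⨍ s in a..b, f (φ s x) := by
  have hfφ : StronglyMeasurable fun p : X × ℝ => f (φ p.2 p.1) :=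
    (hf.comp (hφ.comp measurable_swap)).stronglyMeasurable
  have hset (t : Set ℝ) : StronglyMeasurable fun x => ∫ s in t, f (φ s x) :=
    hfφ.integral_prod_right' (ν := volume.restrict t)
  simp only [interval_average_eq, intervalIntegral]
  exact ((hset _).sub (hset _)).measurable.const_smul (b - a)⁻¹

lemma intervalIntegrable_orbit (hφ : Measurable fun p : ℝ × X => φ p.1 p.2) (hf : Measurable f)
    (hC : ∀ x, |f x| ≤ C) (x : X) (a b : ℝ) :
    IntervalIntegrable (fun s => f (φ s x)) volume a b :=
  (intervalIntegrable_const (c := C)).mono_fun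
    (hf.comp (hφ.comp measurable_prodMk_right)).aestronglyMeasurable
    (ae_of_all _ fun s => (hC (φ s x)).trans (le_abs_self C))

lemma integral_intervalIntegral_orbit [IsFiniteMeasure μ]
    (hφ : Measurable fun p : ℝ × X => φ p.1 p.2) (hinv : ∀ s, μ.map (φ s) = μ)
    (hf : Measurable f) (hC : ∀ x, |f x| ≤ C) (a b : ℝ) :
    ∫ x, (∫ s in a..b, f (φ s x)) ∂μ = (b - a) * ∫ x, f x ∂μ := by
  have : IsFiniteMeasure (volume.restrict (Set.uIoc a b)) := by rw [Set.uIoc]; infer_instance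
  have hint : Integrable (Function.uncurry fun s x => f (φ s x))
      ((volume.restrict (Set.uIoc a b)).prod μ) :=
    Integrable.of_bound (hf.comp hφ).aestronglyMeasurable C (ae_of_all _ fun p => hC _)
  have hconst (s : ℝ) : ∫ x, f (φ s x) ∂μ = ∫ x, f x ∂μ := by
    have hφs : Measurable (φ s) := hφ.comp measurable_prodMk_left
    rw [← integral_map hφs.aemeasurable hf.aestronglyMeasurable, hinv]
  rw [← intervalIntegral_integral_swap hint]
  simp only [hconst, intervalIntegral.integral_const, smul_eq_mul]

lemma integral_nonneg_of_ae_exists_intervalIntegral_orbit_pos [IsFiniteMeasure μ]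
    (hφ : Measurable fun p : ℝ × X => φ p.1 p.2) (hadd : ∀ s t, φ (s + t) = φ s ∘ φ t)
    (hinv : ∀ s, μ.map (φ s) = μ) (hf : Measurable f) (hC : ∀ x, |f x| ≤ C)
    (hpos : ∀ᵐ x ∂μ, ∃ n : ℕ, 0 < ∫ s in 0..(n : ℝ), f (φ s x)) : 0 ≤ ∫ x, f x ∂μ := by
  have hmeas : Measurable fun x => ∫ s in 0..1, f (φ s x) := by
    simpa only [interval_average_eq, sub_zero, inv_one, one_smul]
      using measurable_intervalAverage_orbit hφ hf 0 1
  have hint : Integrable (fun x => ∫ s in 0..1, f (φ s x)) μ :=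
    Integrable.of_bound hmeas.aestronglyMeasurable (C * |1 - 0|) <| ae_of_all _ fun x =>
      intervalIntegral.norm_integral_le_of_norm_le_const fun s _ => hC (φ s x)
  have hφ1 : MeasurePreserving (φ 1) μ μ := ⟨hφ.comp measurable_prodMk_left, hinv 1⟩
  have hnonneg := integral_nonneg_of_ae_exists_birkhoffSum_pos hφ1 hint <| by
    simpa only [birkhoffSum_intervalIntegral_orbit hadd (intervalIntegrable_orbit hφ hf hC)]
      using hpos
  rwa [integral_intervalIntegral_orbit hφ hinv hf hC, sub_zero, one_mul] at hnonneg

end OrbitAverage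

section Egorov

lemma exists_forall_tendstoUniformlyOn_of_ae_tendsto {ι X E : Type*} [Countable ι]
    [MeasurableSpace X] {μ : Measure X} [IsFiniteMeasure μ] [PseudoMetricSpace E]
    {F : ι → ℕ → X → E} {G : ι → X → E} (hF : ∀ i n, StronglyMeasurable (F i n))
    (hG : ∀ i, StronglyMeasurable (G i))
    (hlim : ∀ i, ∀ᵐ x ∂μ, Tendsto (fun n => F i n x) atTop (𝓝 (G i x)))
    {δ : ENNReal} (hδ : δ ≠ 0) :
    ∃ S, MeasurableSet S ∧ μ Sᶜ < δ ∧ ∀ i, TendstoUniformlyOn (F i) (G i) atTop S := by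
  obtain ⟨δ', hδ', hsum⟩ := ENNReal.exists_pos_sum_of_countable hδ ι
  choose N hNmeas hN hunif using fun i =>
    tendstoUniformlyOn_of_ae_tendsto' (hF i) (hG i) (hlim i) (NNReal.coe_pos.2 (hδ' i))
  refine ⟨(⋃ i, N i)ᶜ, (MeasurableSet.iUnion hNmeas).compl, ?_, fun i =>
    (hunif i).mono (Set.compl_subset_compl.2 (Set.subset_iUnion N i))⟩
  simp only [ENNReal.ofReal_coe_nnreal] at hN
  rw [compl_compl]
  exact ((measure_iUnion_le N).trans (ENNReal.tsum_le_tsum hN)).trans_lt hsum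

end Egorov

section Ergodic

variable {X : Type*} [MeasurableSpace X] {φ : ℝ → X → X} {μ : Measure X} {f : X → ℝ} {C : ℝ}

/-- `φ` is a jointly measurable flow which preserves `μ` and is ergodic, in the sense that every
measurable set strictly invariant under all the maps `φ s` has measure `0` or `1`. -/
structure IsErgodicFlow (φ : ℝ → X → X) (μ : Measure X) : Prop where
  measurable : Measurable fun p : ℝ × X => φ p.1 p.2
  map_zero : φ 0 = id
  map_add : ∀ s t, φ (s + t) = φ s ∘ φ t
  map_eq : ∀ s, μ.map (φ s) = μ
  measure_eq_zero_or_one :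
    ∀ A : Set X, MeasurableSet A → (∀ s, φ s ⁻¹' A = A) → μ A = 0 ∨ μ A = 1

namespace IsErgodicFlow

lemma measurePreserving (h : IsErgodicFlow φ μ) (s : ℝ) : MeasurePreserving (φ s) μ μ :=
  ⟨h.measurable.comp measurable_prodMk_left, h.map_eq s⟩

lemma reverse (h : IsErgodicFlow φ μ) : IsErgodicFlow (fun s => φ (-s)) μ where
  measurable := h.measurable.comp (measurable_fst.neg.prodMk measurable_snd)
  map_zero := by rw [neg_zero, h.map_zero]
  map_add s t := by rw [neg_add, h.map_add]
  map_eq s := h.map_eq (-s)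
  measure_eq_zero_or_one A hA hinv :=
    h.measure_eq_zero_or_one A hA fun s => by simpa only [neg_neg] using hinv (-s)

lemma limsup_average_comp (h : IsErgodicFlow φ μ) (hf : Measurable f) (hC : ∀ x, |f x| ≤ C)
    (t : ℝ) (x : X) :
    limsup (fun n : ℕ => ⨍ s in 0..(n : ℝ), f (φ s (φ t x))) atTop =
      limsup (fun n : ℕ => ⨍ s in 0..(n : ℝ), f (φ s x)) atTop := by
  refine limsup_eq_limsup_of_tendsto_sub
    (fun n => abs_intervalAverage_orbit_le hC (φ t x) 0 n)
    (fun n => abs_intervalAverage_orbit_le hC x 0 n) ?_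
  have hlim := tendsto_intervalAverage_comp_add_right_sub
    (intervalIntegrable_orbit h.measurable hf hC x) (fun s => hC (φ s x)) t
  simp only [h.map_add, Function.comp_apply] at hlim
  exact hlim.comp tendsto_natCast_atTop_atTop

variable [IsProbabilityMeasure μ]

lemma ae_limsup_average_le (h : IsErgodicFlow φ μ) (hf : Measurable f) (hC : ∀ x, |f x| ≤ C) :
    ∀ᵐ x ∂μ, limsup (fun n : ℕ => ⨍ s in 0..(n : ℝ), f (φ s x)) atTop ≤ ∫ x, f x ∂μ := by
  rw [ae_le_const_iff_forall_gt_measure_zero]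
  intro c hc
  have hA : MeasurableSet {x | c ≤ limsup (fun n : ℕ => ⨍ s in 0..(n : ℝ), f (φ s x)) atTop} :=
    measurableSet_le measurable_const
      (.limsup fun n => measurable_intervalAverage_orbit h.measurable hf 0 n)
  refine (h.measure_eq_zero_or_one _ hA fun t => ?_).resolve_right fun hone => ?_
  · ext x
    simp only [Set.mem_preimage, Set.mem_ofPred, h.limsup_average_comp hf hC]
  obtain ⟨c', hc', hc'c⟩ := exists_between hc
  have hpos : ∀ᵐ x ∂μ, ∃ n : ℕ, 0 < ∫ s in 0..(n : ℝ), (f (φ s x) - c') := by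
    filter_upwards [(prob_compl_eq_zero_iff hA).2 hone] with x hx
    have hfreq : ∃ᶠ n : ℕ in atTop, c' < ⨍ s in 0..(n : ℝ), f (φ s x) :=
      frequently_lt_of_lt_limsup (h := hc'c.trans_le hx) <| (isBoundedUnder_of
        ⟨-C, fun n : ℕ => (abs_le.1 (abs_intervalAverage_orbit_le hC x 0 n)).1⟩).isCoboundedUnder_le
    obtain ⟨n, hlt, hn⟩ := (hfreq.and_eventually (eventually_gt_atTop 0)).exists
    refine ⟨n, ?_⟩
    rw [interval_average_eq_div, sub_zero, lt_div_iff₀ (Nat.cast_pos.2 hn)] at hlt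
    rw [intervalIntegral.integral_sub (intervalIntegrable_orbit h.measurable hf hC x _ _)
      intervalIntegrable_const, intervalIntegral.integral_const, smul_eq_mul, sub_zero, mul_comm]
    exact sub_pos.2 hlt
  have hnonneg := integral_nonneg_of_ae_exists_intervalIntegral_orbit_pos h.measurable h.map_add
    h.map_eq (hf.sub_const c') (fun x => (abs_sub _ _).trans (add_le_add_left (hC x) _)) hpos
  rw [integral_sub (.of_bound hf.aestronglyMeasurable C (ae_of_all _ hC)) (integrable_const _),
    integral_const, probReal_univ, one_smul] at hnonneg
  linarith

theorem ae_tendsto_average (h : IsErgodicFlow φ μ) (hf : Measurable f) (hC : ∀ x, |f x| ≤ C) :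
    ∀ᵐ x ∂μ, Tendsto (fun n : ℕ => ⨍ s in 0..(n : ℝ), f (φ s x)) atTop (𝓝 (∫ x, f x ∂μ)) := by
  have hneg := h.ae_limsup_average_le hf.neg fun x => (abs_neg (f x)).trans_le (hC x)
  filter_upwards [h.ae_limsup_average_le hf hC, hneg] with x hsup hinf
  simp only [Pi.neg_apply, average_neg, integral_neg] at hinf
  have hbound (n : ℕ) := abs_intervalAverage_orbit_le (φ := φ) hC x 0 n
  refine tendsto_order.2 ⟨fun c hc => ?_, fun c hc => ?_⟩
  · exact (eventually_lt_of_limsup_lt (hinf.trans_lt (neg_lt_neg hc)) (isBoundedUnder_of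
      ⟨C, fun n => (neg_le_abs _).trans (hbound n)⟩)).mono fun n => neg_lt_neg_iff.1
  · exact eventually_lt_of_limsup_lt (hsup.trans_lt hc) (isBoundedUnder_of
      ⟨C, fun n => (le_abs_self _).trans (hbound n)⟩)

theorem ae_tendsto_symmetric_average (h : IsErgodicFlow φ μ) (hf : Measurable f)
    (hC : ∀ x, |f x| ≤ C) :
    ∀ᵐ x ∂μ, Tendsto (fun n : ℕ => ⨍ s in (-n : ℝ)..n, f (φ s x)) atTop (𝓝 (∫ x, f x ∂μ)) := by
  filter_upwards [h.ae_tendsto_average hf hC, h.reverse.ae_tendsto_average hf hC]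
    with x hforward hbackward
  have hsum := (hforward.add hbackward).div_const 2
  rw [add_self_div_two] at hsum
  exact hsum.congr fun n =>
    (intervalAverage_neg_self (intervalIntegrable_orbit h.measurable hf hC x) n).symm

theorem exists_forall_tendstoUniformlyOn_average {ι : Type*} [Countable ι] {f : ι → X → ℝ}
    {C : ι → ℝ} (h : IsErgodicFlow φ μ) (hf : ∀ i, Measurable (f i)) (hC : ∀ i x, |f i x| ≤ C i)
    {δ : ENNReal} (hδ : δ ≠ 0) :
    ∃ Ω, MeasurableSet Ω ∧ μ Ωᶜ < δ ∧ ∀ i, TendstoUniformlyOn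
      (fun (L : ℝ) x => ⨍ s in (-L)..L, f i (φ s x)) (fun _ => ∫ x, f i x ∂μ) atTop Ω := by
  obtain ⟨Ω, hΩ, hΩδ, hunif⟩ := exists_forall_tendstoUniformlyOn_of_ae_tendsto
    (fun i (n : ℕ) => (measurable_intervalAverage_orbit h.measurable (hf i)
      (-n : ℝ) n).stronglyMeasurable)
    (fun _ => stronglyMeasurable_const) (fun i => h.ae_tendsto_symmetric_average (hf i) (hC i)) hδ
  exact ⟨Ω, hΩ, hΩδ, fun i => tendstoUniformlyOn_intervalAverage_of_nat
    (fun x => intervalIntegrable_orbit h.measurable (hf i) (hC i) x)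
    (fun x s => hC i (φ s x)) (hunif i)⟩

end IsErgodicFlow

end Ergodic

section OpenSets

open TopologicalSpace in
lemma exists_countable_isOpen_forall_innerRegularWRT (X : Type*) [TopologicalSpace X]
    [SecondCountableTopology X] [MeasurableSpace X] :
    ∃ 𝒱 : Set (Set X), 𝒱.Countable ∧ (∀ V ∈ 𝒱, IsOpen V) ∧
      ∀ μ : Measure X, μ.InnerRegularWRT (· ∈ 𝒱) IsOpen := by
  refine ⟨Set.sUnion '' {T : Set (Set X) | T.Finite ∧ T ⊆ countableBasis X},
    (Set.countable_ofPred_finite_subset (countable_countableBasis X)).image _, ?_, ?_⟩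
  · rintro _ ⟨T, ⟨-, hT⟩, rfl⟩
    exact isOpen_sUnion fun b hb => isOpen_of_mem_countableBasis (hT hb)
  intro μ U hU r hr
  let B : Set (Set X) := {b ∈ countableBasis X | b ⊆ U}
  have : Countable B := (countable_countableBasis X).mono (Set.sep_subset _ _) |>.to_subtype
  have hUB : U = ⋃ F : Finset B, ⋃ b ∈ F, (b : Set X) := by
    rw [← Set.iUnion_eq_iUnion_finset, ← Set.sUnion_eq_iUnion]
    exact (isBasis_countableBasis X).open_eq_sUnion' hU
  have hmono : Monotone fun F : Finset B => ⋃ b ∈ F, (b : Set X) :=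
    fun F G hFG => Set.biUnion_subset_biUnion_left hFG
  rw [hUB, hmono.measure_iUnion] at hr
  obtain ⟨F, hF⟩ := lt_iSup_iff.1 hr
  refine ⟨⋃ b ∈ F, (b : Set X), Set.iUnion₂_subset fun b _ => b.2.2,
    ⟨Subtype.val '' (F : Set B), ⟨F.finite_toSet.image _, ?_⟩, ?_⟩, hF⟩
  · rintro _ ⟨b, -, rfl⟩
    exact b.2.1
  · simp only [Set.sUnion_image, Finset.mem_coe]

end OpenSets

section UniformGenericity

variable {X : Type*} [MeasurableSpace X] {φ : ℝ → X → X} {μ : Measure X} [IsProbabilityMeasure μ]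

theorem IsErgodicFlow.exists_forall_isOpen_eventually_lt_volume [TopologicalSpace X]
    [SecondCountableTopology X] [OpensMeasurableSpace X] (h : IsErgodicFlow φ μ)
    {δ : ENNReal} (hδ : δ ≠ 0) :
    ∃ Ω, MeasurableSet Ω ∧ μ Ωᶜ < δ ∧ ∀ U : Set X, IsOpen U → ∀ r < μ U, ∀ᶠ L : ℝ in atTop,
      ∀ ω ∈ Ω, r * ENNReal.ofReal (2 * L) < volume {s | s ∈ Set.Icc (-L) L ∧ φ s ω ∈ U} := by
  obtain ⟨𝒱, h𝒱, hopen, hreg⟩ := exists_countable_isOpen_forall_innerRegularWRT X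
  have : Countable 𝒱 := h𝒱.to_subtype
  have hmeas (V : 𝒱) : MeasurableSet (V : Set X) := (hopen V V.2).measurableSet
  obtain ⟨Ω, hΩ, hΩδ, hunif⟩ := h.exists_forall_tendstoUniformlyOn_average
    (f := fun V : 𝒱 => (V : Set X).indicator fun _ => (1 : ℝ)) (C := fun _ => 1)
    (fun V => measurable_const.indicator (hmeas V))
    (fun V x => (norm_indicator_le_norm_self (fun _ => (1 : ℝ)) x).trans_eq norm_one) hδ
  refine ⟨Ω, hΩ, hΩδ, fun U hU r hr => ?_⟩
  obtain ⟨V, hVU, hV, hrV⟩ := hreg μ hU r hr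
  have hint : ∫ x, V.indicator (fun _ => (1 : ℝ)) x ∂μ = μ.real V := by
    rw [integral_indicator_const _ (hmeas ⟨V, hV⟩), smul_eq_mul, mul_one]
  have hrV' : r.toReal < μ.real V := ENNReal.toReal_strict_mono (measure_ne_top μ V) hrV
  filter_upwards [Metric.tendstoUniformlyOn_iff.1 (hunif ⟨V, hV⟩) _ (sub_pos.2 hrV'),
    eventually_gt_atTop 0] with L hclose hL ω hω
  have haverage : r.toReal < ⨍ s in (-L)..L, V.indicator (fun _ => (1 : ℝ)) (φ s ω) := by
    have hdist := (abs_lt.1 (hclose ω hω)).2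
    rw [hint] at hdist
    linarith
  have hA : MeasurableSet {s | φ s ω ∈ V} :=
    (h.measurable.comp measurable_prodMk_right) (hmeas ⟨V, hV⟩)
  have hlt := haverage.trans_eq (intervalAverage_indicator_one hA (by linarith : -L ≤ L))
  rw [sub_neg_eq_add, ← two_mul, lt_div_iff₀ (by positivity)] at hlt
  calc r * ENNReal.ofReal (2 * L)
      = ENNReal.ofReal (r.toReal * (2 * L)) := by
        rw [ENNReal.ofReal_mul ENNReal.toReal_nonneg, ENNReal.ofReal_toReal hr.ne_top]
    _ < volume ({s | φ s ω ∈ V} ∩ Set.Ioc (-L) L) :=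
        (ENNReal.ofReal_lt_iff_lt_toReal (by positivity)
          (measure_ne_top_of_subset Set.inter_subset_right measure_Ioc_lt_top.ne)).2 hlt
    _ ≤ volume {s | s ∈ Set.Icc (-L) L ∧ φ s ω ∈ U} :=
        measure_mono fun s hs => ⟨Set.Ioc_subset_Icc_self hs.2, hVU hs.1⟩

theorem exists_uniformly_generic_set_general [PseudoMetricSpace X] [SecondCountableTopology X]
    [OpensMeasurableSpace X] (h : IsErgodicFlow φ μ) {ρ : ℝ} (hρ : 0 < ρ) :
    ∃ Ω : Set X, MeasurableSet Ω ∧ 1 - ENNReal.ofReal ρ < μ Ω ∧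
      ∀ ε : ℝ, 0 < ε → ∀ K : Set X, 1 - ENNReal.ofReal ε < μ K →
        ∃ L₀ : ℝ, 0 < L₀ ∧ ∀ ω ∈ Ω, ∀ L : ℝ, L₀ < L →
          ENNReal.ofReal ((1 - ε) * (2 * L)) <
            volume {s : ℝ | s ∈ Set.Icc (-L) L ∧ Metric.infDist (φ s ω) K < ε} := by
  obtain ⟨Ω, hΩ, hΩρ, hopen⟩ := h.exists_forall_isOpen_eventually_lt_volume
    (lt_min (ENNReal.ofReal_pos.2 hρ) one_pos).ne'
  refine ⟨Ω, hΩ, ?_, fun ε hε K hK => ?_⟩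
  · have htotal : 1 < μ Ω + min (ENNReal.ofReal ρ) 1 := by
      calc 1 = μ Ω + μ Ωᶜ := (prob_add_prob_compl hΩ).symm
        _ < μ Ω + min (ENNReal.ofReal ρ) 1 := ENNReal.add_lt_add_left (measure_ne_top μ Ω) hΩρ
    exact (tsub_le_tsub_left (min_le_left _ _) 1).trans_lt
      (ENNReal.sub_lt_of_lt_add (min_le_right _ _) htotal)
  have hKne : K.Nonempty := nonempty_of_measure_ne_zero hK.ne_bot
  obtain ⟨L₀, hL₀⟩ := ((hopen (Metric.thickening ε K) Metric.isOpen_thickening _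
    (hK.trans_le (measure_mono (Metric.self_subset_thickening hε K)))).and
      (eventually_gt_atTop 0)).exists_forall_of_atTop
  refine ⟨L₀, (hL₀ L₀ le_rfl).2, fun ω hω L hL => ?_⟩
  obtain ⟨hlt, hLpos⟩ := hL₀ L hL.le
  rw [ENNReal.ofReal_mul' (by positivity), ENNReal.ofReal_sub _ hε.le, ENNReal.ofReal_one]
  simpa only [Metric.mem_thickening_iff_infDist_lt hKne] using hlt ω hω

end UniformGenericity

/-- Lemma `UnifGeneric`: existence of uniformly generic sets for an ergodic
measurable flow on a Polish metric space. -/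
theorem exists_uniformly_generic_set
    {X : Type*} [MetricSpace X] [PolishSpace X] [MeasurableSpace X] [BorelSpace X]
    (φ : ℝ → X → X) (hmeas : Measurable fun p : ℝ × X => φ p.1 p.2)
    (h0 : φ 0 = id) (hadd : ∀ s t : ℝ, φ (s + t) = φ s ∘ φ t)
    (μ : Measure X) [IsProbabilityMeasure μ]
    (hinv : ∀ s : ℝ, Measure.map (φ s) μ = μ)
    (herg : ∀ A : Set X, MeasurableSet A → (∀ s : ℝ, φ s ⁻¹' A = A) → μ A = 0 ∨ μ A = 1) :
    ∀ ρ : ℝ, 0 < ρ →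
      ∃ Ω : Set X, MeasurableSet Ω ∧ 1 - ENNReal.ofReal ρ < μ Ω ∧
        ∀ ε : ℝ, 0 < ε → ∀ K : Set X, IsCompact K → 1 - ENNReal.ofReal ε < μ K →
          ∃ L₀ : ℝ, 0 < L₀ ∧ ∀ ω ∈ Ω, ∀ L : ℝ, L₀ < L →
            ENNReal.ofReal ((1 - ε) * (2 * L)) <
              volume {s : ℝ | s ∈ Set.Icc (-L) L ∧ Metric.infDist (φ s ω) K < ε} := by
  intro ρ hρ
  obtain ⟨Ω, hΩ, hμΩ, hgeneric⟩ :=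
    exists_uniformly_generic_set_general ⟨hmeas, h0, hadd, hinv, herg⟩ hρ
  exact ⟨Ω, hΩ, hμΩ, fun ε hε K _ => hgeneric ε hε K⟩
end

section
/- Let G be the semidirect product ℝ ⋉ ℝ^k with underlying set ℝ × ℝ^k and multiplication (s, x)·(s', x') = (s + s', x + e^s · x'). Let φ : ℝ → G be a continuous group homomorphism, φ(t) = (α(t), x(t)), such that α is not identically zero. Then there exist v ∈ ℝ^k and a nonzero real number c such that (0, v) · φ(t) · (0, v)^{-1} = (c·t, 0) for every t ∈ ℝ. -/
/-- Multiplication of the semidirect product `ℝ ⋉ ℝ^k`, where `s ∈ ℝ` acts on `ℝ^k` by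
scaling by `e^s`: `(s, x)·(s', x') = (s + s', x + e^s · x')`. -/
noncomputable def gMul {k : ℕ} (p q : ℝ × (Fin k → ℝ)) : ℝ × (Fin k → ℝ) :=
  (p.1 + q.1, p.2 + Real.exp p.1 • q.2)

/-!
The second component `x` of a one-parameter subgroup is a crossed homomorphism:
`x (s + t) = x s + e^(α s) • x t`. Exchanging `s` and `t` gives
`(e^(α s) - 1) • x t = (e^(α t) - 1) • x s`, so one `s = a` with `α a ≠ 0` already determines
`x t = (e^(α t) - 1) • v` for a fixed vector `v`, and conjugating by `(0, v)` kills exactly such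
an `x`. What remains is the continuous additive function `α`, which is linear.
-/

section CrossedHom

variable {A R M : Type*} [AddCommMagma A] [AddCommGroup M] {u : A → R} {x : A → M}

lemma sub_one_smul_comm_of_crossedHom [Ring R] [Module R M]
    (hx : ∀ s t, x (s + t) = x s + u s • x t) (s t : A) :
    (u s - 1) • x t = (u t - 1) • x s := by
  have hcomm : x s + u s • x t = x t + u t • x s := by
    rw [← hx, ← hx, add_comm]
  rw [sub_smul, sub_smul, one_smul, one_smul, sub_eq_sub_iff_add_eq_add, add_comm, hcomm,
    add_comm]

lemma exists_eq_sub_one_smul_of_crossedHom [CommRing R] [Module R M]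
    (hx : ∀ s t, x (s + t) = x s + u s • x t) {a : A} (ha : IsUnit (u a - 1)) :
    ∃ v : M, ∀ t, x t = (u t - 1) • v := by
  obtain ⟨w, hw⟩ := ha
  refine ⟨w⁻¹ • x a, fun t ↦ ?_⟩
  rw [smul_comm, ← sub_one_smul_comm_of_crossedHom hx a t, ← hw, ← Units.smul_def,
    inv_smul_smul]

end CrossedHom

section ScalingMul

variable {E : Type*} [AddCommGroup E] [Module ℝ E]

/-- Multiplication of the semidirect product `ℝ ⋉ E` for a real vector space `E` on which `s ∈ ℝ`
acts by scaling by `e^s`; for `E = ℝ^k` it unfolds to the same expression as `gMul`. -/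
noncomputable def scalingMul (p q : ℝ × E) : ℝ × E :=
  (p.1 + q.1, p.2 + Real.exp p.1 • q.2)

lemma scalingMul_conj (v : E) (p : ℝ × E) :
    scalingMul (scalingMul (0, v) p) (0, -v) = (p.1, p.2 - (Real.exp p.1 - 1) • v) := by
  ext1
  · simp [scalingMul]
  · simp only [scalingMul, Real.exp_zero, zero_add]
    module

lemma exists_scalingMul_conj_eq_fst_zero {A : Type*} [AddCommMagma A] {φ : A → ℝ × E}
    (hadd : ∀ s t, φ (s + t) = scalingMul (φ s) (φ t)) (hα : ∃ a, (φ a).1 ≠ 0) :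
    ∃ v : E, ∀ t, scalingMul (scalingMul (0, v) (φ t)) (0, -v) = ((φ t).1, 0) := by
  obtain ⟨a, ha⟩ := hα
  have hunit : IsUnit (Real.exp (φ a).1 - 1) :=
    (sub_ne_zero.mpr (mt (Real.exp_eq_one_iff _).mp ha)).isUnit
  obtain ⟨v, hv⟩ := exists_eq_sub_one_smul_of_crossedHom
    (u := fun t ↦ Real.exp (φ t).1) (x := fun t ↦ (φ t).2)
    (fun s t ↦ congrArg Prod.snd (hadd s t)) hunit
  exact ⟨v, fun t ↦ by rw [scalingMul_conj, hv t, sub_self]⟩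

theorem one_parameter_subgroup_conjugate_general (φ : ℝ → ℝ × E)
    (hcont : Continuous fun t ↦ (φ t).1)
    (hadd : ∀ s t : ℝ, φ (s + t) = scalingMul (φ s) (φ t))
    (hα : ∃ t : ℝ, (φ t).1 ≠ 0) :
    ∃ (v : E) (c : ℝ), c ≠ 0 ∧
      ∀ t : ℝ, scalingMul (scalingMul (0, v) (φ t)) (0, -v) = (c * t, 0) := by
  let α : ℝ →+ ℝ := .mk' (fun t ↦ (φ t).1) fun s t ↦ congrArg Prod.fst (hadd s t)
  have hlin (t : ℝ) : (φ t).1 = (φ 1).1 * t := by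
    have hsmul : α (t • 1) = t • α 1 := map_real_smul α hcont t 1
    rwa [smul_eq_mul, mul_one, smul_eq_mul, mul_comm] at hsmul
  obtain ⟨v, hv⟩ := exists_scalingMul_conj_eq_fst_zero hadd hα
  obtain ⟨a, ha⟩ := hα
  exact ⟨v, (φ 1).1, left_ne_zero_of_mul (hlin a ▸ ha), fun t ↦ by rw [hv, hlin t]⟩

end ScalingMul

/-- any continuous one-parameter subgroup of `ℝ ⋉ ℝ^k` whose first component is
not identically zero is conjugate, by an element `(0, v)`, to `t ↦ (c·t, 0)` for some `c ≠ 0`. -/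
theorem one_parameter_subgroup_conjugate (k : ℕ) (φ : ℝ → ℝ × (Fin k → ℝ))
    (hcont : Continuous φ) (h0 : φ 0 = (0, 0))
    (hadd : ∀ s t : ℝ, φ (s + t) = gMul (φ s) (φ t))
    (hα : ∃ t : ℝ, (φ t).1 ≠ 0) :
    ∃ (v : Fin k → ℝ) (c : ℝ), c ≠ 0 ∧
      ∀ t : ℝ, gMul (gMul (0, v) (φ t)) (0, -v) = ((c * t, 0) : ℝ × (Fin k → ℝ)) :=
  one_parameter_subgroup_conjugate_general φ hcont.fst hadd hα
end

section
/- For every odd integer n ≥ 3, the identity ∑_{j=1}^{(n-1)/2} 1 / sin²( π(2j-1)/n ) = (n² - 1)/6 holds. -/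
/-!
The numbers `cos (k * π / n)`, `0 < k < n`, are the roots of the Chebyshev polynomial `U (n - 1)`,
whose logarithmic derivative at `1` therefore evaluates `∑ 1 / (1 - cos (k * π / n))`.
For odd `n` the reflection `k ↦ n - k` exchanges odd and even `k` and changes the sign of the
cosine, and `1 / (1 - cos x) + 1 / (1 + cos x) = 2 / sin x ^ 2`.
-/

open Finset Real

section Chebyshev

open Polynomial Polynomial.Chebyshev

theorem splits_U_real (n : ℕ) : (U ℝ n).Splits := by
  have hinj := (range n).nodup_map_iff_injOn.mp (roots_U_real_nodup n)
  rw [splits_iff_card_roots, roots_U_real, card_val, card_image_of_injOn hinj, card_range,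
    natDegree_U_natCast]

theorem sum_one_div_sub_cos (n : ℕ) {x : ℝ} (hx : (U ℝ n).eval x ≠ 0) :
    ∑ k ∈ Icc 1 n, 1 / (x - cos (k * π / (n + 1))) =
      (derivative (U ℝ n)).eval x / (U ℝ n).eval x := by
  have hinj := (range n).nodup_map_iff_injOn.mp (roots_U_real_nodup n)
  calc ∑ k ∈ Icc 1 n, 1 / (x - cos (k * π / (n + 1)))
    _ = ∑ k ∈ range n, 1 / (x - cos ((k + 1) * π / (n + 1))) := by
      rw [range_eq_Ico, ← Ico_add_one_right_eq_Icc, ← zero_add 1, ← sum_Ico_add']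
      simp only [Nat.cast_add_one]
    _ = ((U ℝ n).roots.map fun z ↦ 1 / (x - z)).sum := by
      rw [roots_U_real]
      exact (sum_image (f := fun z ↦ 1 / (x - z)) hinj).symm
    _ = _ := ((splits_U_real n).eval_derivative_div_eval_of_ne_zero hx).symm

theorem sum_one_div_one_sub_cos (n : ℕ) :
    ∑ k ∈ Icc 1 n, 1 / (1 - cos (k * π / (n + 1))) = (n * (n + 2) : ℝ) / 3 := by
  have hU : (U ℝ n).eval 1 = (n : ℝ) + 1 := by simp
  have hn : (n : ℝ) + 1 ≠ 0 := by positivity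
  rw [sum_one_div_sub_cos n (hU ▸ hn), derivative_U_eval_one_eq_div, hU]
  push_cast
  field_simp

end Chebyshev

theorem one_div_one_sub_cos_add_one_div_one_add_cos {x : ℝ} (hx : sin x ≠ 0) :
    1 / (1 - cos x) + 1 / (1 + cos x) = 2 / sin x ^ 2 := by
  have hsq : sin x ^ 2 = (1 - cos x) * (1 + cos x) := by rw [sin_sq]; ring
  have hmul : (1 - cos x) * (1 + cos x) ≠ 0 := hsq ▸ pow_ne_zero 2 hx
  rw [hsq, div_add_div _ _ (left_ne_zero_of_mul hmul) (right_ne_zero_of_mul hmul)]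
  ring

theorem sin_mul_pi_div_pos {k n : ℕ} (hk : 0 < k) (hkn : k < n) : 0 < sin (k * π / n) := by
  have hn : (0 : ℝ) < n := by exact_mod_cast hk.trans hkn
  refine sin_pos_of_pos_of_lt_pi (by positivity) ?_
  rw [div_lt_iff₀ hn, mul_comm]
  gcongr

theorem cos_natCast_sub_mul_pi_div {k n : ℕ} (hn : n ≠ 0) (hkn : k ≤ n) :
    cos ((n - k : ℕ) * π / n) = -cos (k * π / n) := by
  rw [← cos_pi_sub, Nat.cast_sub hkn]
  congr 1
  field_simp

theorem one_div_sin_mul_pi_div_sq {k n : ℕ} (hk : 0 < k) (hkn : k < n) :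
    1 / sin (k * π / n) ^ 2 =
      (1 / (1 - cos (k * π / n)) + 1 / (1 - cos ((n - k : ℕ) * π / n))) / 2 := by
  rw [cos_natCast_sub_mul_pi_div (by lia) hkn.le, sub_neg_eq_add,
    one_div_one_sub_cos_add_one_div_one_add_cos (sin_mul_pi_div_pos hk hkn).ne']
  ring

theorem sum_Icc_one_two_mul {M : Type*} [AddCommMonoid M] (f : ℕ → M) (m : ℕ) :
    ∑ k ∈ Icc 1 (2 * m), f k = ∑ j ∈ Icc 1 m, (f (2 * j - 1) + f (2 * j)) := by
  induction m with
  | zero => simp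
  | succ m ih =>
    rw [sum_Icc_succ_top (by lia), ← ih, Nat.mul_add_one, sum_Icc_succ_top (by lia),
      sum_Icc_succ_top (by lia), add_assoc]
    rfl

theorem sum_Icc_one_two_mul_eq_sum_add_reflect {M : Type*} [AddCommMonoid M] (f : ℕ → M) (m : ℕ) :
    ∑ k ∈ Icc 1 (2 * m), f k =
      ∑ j ∈ Icc 1 m, (f (2 * j - 1) + f (2 * m + 1 - (2 * j - 1))) := by
  have hreflect : ∑ j ∈ Icc 1 m, f (2 * (m + 1 - j)) = ∑ j ∈ Icc 1 m, f (2 * j) := by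
    simpa [Ico_add_one_right_eq_Icc] using
      sum_Ico_reflect (fun j ↦ f (2 * j)) 1 (Nat.le_succ (m + 1))
  rw [sum_Icc_one_two_mul, sum_add_distrib, sum_add_distrib, ← hreflect]
  congr 1
  refine sum_congr rfl fun j hj ↦ congrArg f ?_
  have := mem_Icc.mp hj
  lia

/-- Veech's identity: for odd `n ≥ 3`,
`∑_{j=1}^{(n-1)/2} 1 / sin²(π(2j-1)/n) = (n² - 1)/6`. -/
theorem sum_inv_sin_sq (n : ℕ) (hodd : Odd n) (hn : 3 ≤ n) :
    ∑ j ∈ Finset.Icc 1 ((n - 1) / 2),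
        1 / Real.sin (Real.pi * (2 * (j : ℝ) - 1) / n) ^ 2 = ((n : ℝ) ^ 2 - 1) / 6 := by
  obtain ⟨m, rfl⟩ := hodd
  let f (k : ℕ) : ℝ := 1 / (1 - cos (k * π / (2 * m + 1 : ℕ)))
  have hpair : ∀ j ∈ Icc 1 m, 1 / sin (π * (2 * (j : ℝ) - 1) / (2 * m + 1 : ℕ)) ^ 2 =
      (f (2 * j - 1) + f (2 * m + 1 - (2 * j - 1))) / 2 := by
    intro j hj
    obtain ⟨hj1, hjm⟩ := mem_Icc.mp hj
    have hcast : ((2 * j - 1 : ℕ) : ℝ) = 2 * j - 1 := by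
      rw [Nat.cast_pred (by lia), Nat.cast_mul, Nat.cast_two]
    rw [← hcast, mul_comm π, one_div_sin_mul_pi_div_sq (by lia) (by lia)]
  calc ∑ j ∈ Icc 1 ((2 * m + 1 - 1) / 2), 1 / sin (π * (2 * (j : ℝ) - 1) / (2 * m + 1 : ℕ)) ^ 2
    _ = (∑ j ∈ Icc 1 m, (f (2 * j - 1) + f (2 * m + 1 - (2 * j - 1)))) / 2 := by
      rw [show (2 * m + 1 - 1) / 2 = m by lia, sum_congr rfl hpair, sum_div]
    _ = (∑ k ∈ Icc 1 (2 * m), f k) / 2 := by rw [sum_Icc_one_two_mul_eq_sum_add_reflect]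
    _ = ((2 * m : ℕ) * ((2 * m : ℕ) + 2) : ℝ) / 3 / 2 := by
      simp only [f, Nat.cast_add_one, sum_one_div_one_sub_cos]
    _ = (((2 * m + 1 : ℕ) : ℝ) ^ 2 - 1) / 6 := by push_cast; ring
end

section
/- Let n ≥ 5 be an odd integer, and for 1 ≤ j ≤ (n-1)/2 set h_j = 4 sin(π(2j-1)/n) cos(π/n) and w_j = 2 sin(π(2j-1)/n) sin(π/n). Then ∑_{j=1}^{(n-1)/2} 1/(h_j · w_j) = (n² - 1) / ( 48 sin(π/n) cos(π/n) ). -/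
/-!
Each summand equals `1 / sin² (π(2j-1)/n)` divided by `8 sin (π/n) cos (π/n)`, so the claim is about
the sum of `1 / sin² (πk/n)` over the odd `k < n`. As `n` is odd, `k ↦ n - k` exchanges the odd and
the even `k` and fixes `sin² (πk/n)`, so this is half of the sum over all `0 < k < n`.

With `z = exp (2πik/n)` one has `1 / sin² (πk/n) = -4z / (1 - z)²`, and for every `n`-th root of
unity `z ≠ 1` the rational function `z / (1 - z)²` is a polynomial: `2n z / (1 - z)²` equals
`∑ r (n - r) z ^ r` over `r < n`. For fixed `0 < r < n` the powers `z ^ r` of the nontrivial roots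
of unity sum to `-1`, which leaves the elementary sum `∑ r (n - r) = n (n² - 1) / 6`.
-/

open Finset

section CommRing

variable {R : Type*} [CommRing R]

lemma six_mul_sum_mul_sub (a : R) (N : ℕ) :
    6 * ∑ r ∈ range N, r * (a - r) = N * (N - 1) * (3 * a - 2 * N + 1) := by
  induction N with
  | zero => simp
  | succ N ih =>
    rw [sum_range_succ, mul_add, ih]
    push_cast
    ring

-- The second difference of `r * (a - r)` is the constant `-2`, whence the geometric sum.
lemma one_sub_sq_mul_sum_mul_sub_mul_pow (a z : R) (N : ℕ) :
    (1 - z) ^ 2 * ∑ r ∈ range N, r * (a - r) * z ^ r =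
      (a + 1) * z + 2 - 2 * ∑ r ∈ range (N + 1), z ^ r - N * (a - N) * z ^ N +
        (N - 1) * (a - N + 1) * z ^ (N + 1) := by
  induction N with
  | zero =>
    simp only [range_zero, sum_empty, zero_add, sum_range_one, Nat.cast_zero, pow_zero, pow_one]
    ring
  | succ N ih =>
    rw [sum_range_succ, mul_add, ih, sum_range_succ _ (N + 1)]
    push_cast
    ring

lemma geom_sum_eq_zero_of_pow_eq_one [IsDomain R] {z : R} {n : ℕ} (hpow : z ^ n = 1)
    (hne : z ≠ 1) : ∑ r ∈ range n, z ^ r = 0 := by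
  apply mul_right_cancel₀ (sub_ne_zero.mpr hne)
  rw [geom_sum_mul, hpow, sub_self, zero_mul]

lemma sum_Ico_one_pow_pow_of_isPrimitiveRoot [IsDomain R] {ζ : R} {n r : ℕ}
    (hζ : IsPrimitiveRoot ζ n) (hr : r ≠ 0) (hrn : r < n) :
    ∑ k ∈ Ico 1 n, (ζ ^ k) ^ r = -1 := by
  have hpow : (ζ ^ r) ^ n = 1 := by rw [pow_right_comm, hζ.pow_eq_one, one_pow]
  have hgeom := geom_sum_eq_zero_of_pow_eq_one hpow (hζ.pow_ne_one_of_pos_of_lt hr hrn)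
  rw [range_eq_Ico, sum_eq_sum_Ico_succ_bot (Nat.zero_lt_of_lt hrn), pow_zero] at hgeom
  simp_rw [pow_right_comm ζ _ r]
  exact eq_neg_of_add_eq_zero_right hgeom

end CommRing

section Field

variable {K : Type*} [Field K]

lemma sum_mul_sub_mul_pow_of_pow_eq_one {z : K} {n : ℕ} (hpow : z ^ n = 1) (hne : z ≠ 1) :
    ∑ r ∈ range n, r * (n - r) * z ^ r = 2 * n * (z / (1 - z) ^ 2) := by
  rw [← mul_div_assoc, eq_div_iff (pow_ne_zero 2 (sub_ne_zero.mpr hne.symm)), mul_comm,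
    one_sub_sq_mul_sum_mul_sub_mul_pow, sum_range_succ, geom_sum_eq_zero_of_pow_eq_one hpow hne,
    pow_succ, hpow]
  ring

lemma twelve_mul_sum_pow_div_one_sub_pow_sq {ζ : K} {n : ℕ} (hζ : IsPrimitiveRoot ζ n)
    (hn : n ≠ 0) : 12 * ∑ k ∈ Ico 1 n, ζ ^ k / (1 - ζ ^ k) ^ 2 = 1 - (n : K) ^ 2 := by
  have : NeZero n := ⟨hn⟩
  have hexpand : ∀ k ∈ Ico 1 n, 2 * n * (ζ ^ k / (1 - ζ ^ k) ^ 2) =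
      ∑ r ∈ range n, r * (n - r) * (ζ ^ k) ^ r := by
    intro k hk
    obtain ⟨hk1, hkn⟩ := mem_Ico.mp hk
    have hpow : (ζ ^ k) ^ n = 1 := by rw [pow_right_comm, hζ.pow_eq_one, one_pow]
    exact (sum_mul_sub_mul_pow_of_pow_eq_one hpow
      (hζ.pow_ne_one_of_pos_of_lt (Nat.ne_zero_of_lt hk1) hkn)).symm
  have hinner : ∀ r ∈ range n, ∑ k ∈ Ico 1 n, r * (n - r) * (ζ ^ k) ^ r = -(r * (n - r) : K) := by
    intro r hr
    rw [← mul_sum]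
    rcases eq_or_ne r 0 with rfl | hr0
    · simp
    · rw [sum_Ico_one_pow_pow_of_isPrimitiveRoot hζ hr0 (mem_range.mp hr), mul_neg_one]
  have hsum : 2 * n * ∑ k ∈ Ico 1 n, ζ ^ k / (1 - ζ ^ k) ^ 2 =
      -∑ r ∈ range n, (r * (n - r) : K) := by
    rw [mul_sum, sum_congr rfl hexpand, sum_comm, sum_congr rfl hinner, sum_neg_distrib]
  apply mul_left_cancel₀ hζ.neZero'.out
  linear_combination 6 * hsum - six_mul_sum_mul_sub (n : K) n

end Field

section Reflection

variable {M : Type*} [AddCommMonoid M]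

lemma sum_Ico_one_eq_sum_odd_add_sum_even (f : ℕ → M) (m : ℕ) :
    ∑ k ∈ Ico 1 (2 * m + 1), f k = ∑ j ∈ Icc 1 m, f (2 * j - 1) + ∑ j ∈ Icc 1 m, f (2 * j) := by
  induction m with
  | zero => simp
  | succ m ih =>
    rw [Nat.mul_succ, sum_Ico_succ_top (by lia), sum_Ico_succ_top (by lia), ih,
      sum_Icc_succ_top (by lia), sum_Icc_succ_top (by lia), add_add_add_comm, add_assoc]
    rfl

lemma sum_Ico_one_eq_two_nsmul_sum_odd {f : ℕ → M} {m : ℕ}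
    (hf : ∀ k ∈ Ico 1 (2 * m + 1), f (2 * m + 1 - k) = f k) :
    ∑ k ∈ Ico 1 (2 * m + 1), f k = 2 • ∑ j ∈ Icc 1 m, f (2 * j - 1) := by
  have heven : ∑ j ∈ Icc 1 m, f (2 * j) = ∑ j ∈ Icc 1 m, f (2 * j - 1) := by
    apply sum_nbij' (m + 1 - ·) (m + 1 - ·) <;> grind
  rw [sum_Ico_one_eq_sum_odd_add_sum_even, heven, two_nsmul]

end Reflection

section Trigonometric

lemma one_div_sin_sq_eq_exp (θ : ℂ) :
    1 / Complex.sin θ ^ 2 =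
      -4 * (Complex.exp (2 * θ * Complex.I) / (1 - Complex.exp (2 * θ * Complex.I)) ^ 2) := by
  have hexp : Complex.exp (2 * θ * Complex.I) = Complex.exp (θ * Complex.I) ^ 2 := by
    rw [mul_assoc, two_mul, Complex.exp_add, sq]
  have hsin : Complex.sin θ ^ 2 = (1 - Complex.exp (2 * θ * Complex.I)) ^ 2 /
      (-4 * Complex.exp (2 * θ * Complex.I)) := by
    rw [hexp, Complex.sin, neg_mul, Complex.exp_neg]
    field_simp
    rw [Complex.I_sq]
    ring
  rw [hsin, one_div_div, mul_div_assoc]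

lemma sum_Ico_one_div_sin_sq {n : ℕ} (hn : n ≠ 0) :
    ∑ k ∈ Ico 1 n, 1 / Real.sin (Real.pi * k / n) ^ 2 = ((n : ℝ) ^ 2 - 1) / 3 := by
  have hterm (k : ℕ) : ((1 / Real.sin (Real.pi * k / n) ^ 2 : ℝ) : ℂ) =
      -4 * (Complex.exp (2 * Real.pi * Complex.I / n) ^ k /
        (1 - Complex.exp (2 * Real.pi * Complex.I / n) ^ k) ^ 2) := by
    push_cast
    rw [one_div_sin_sq_eq_exp, ← Complex.exp_nat_mul]
    ring_nf
  have hsum := twelve_mul_sum_pow_div_one_sub_pow_sq (Complex.isPrimitiveRoot_exp n hn) hn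
  apply Complex.ofReal_injective
  rw [Complex.ofReal_sum, sum_congr rfl fun k _ ↦ hterm k, ← mul_sum]
  push_cast
  linear_combination -hsum / 3

lemma sin_pi_mul_sub_div {n k : ℕ} (hn : n ≠ 0) (hk : k ≤ n) :
    Real.sin (Real.pi * (n - k : ℕ) / n) = Real.sin (Real.pi * k / n) := by
  have hangle : Real.pi * (n - k : ℕ) / n = Real.pi - Real.pi * k / n := by
    rw [Nat.cast_sub hk]
    field_simp
  rw [hangle, Real.sin_pi_sub]

lemma sum_odd_one_div_sin_sq_of_odd {n : ℕ} (hn : Odd n) :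
    ∑ j ∈ Icc 1 ((n - 1) / 2), 1 / Real.sin (Real.pi * (2 * (j : ℝ) - 1) / n) ^ 2 =
      ((n : ℝ) ^ 2 - 1) / 6 := by
  have hn0 : n ≠ 0 := hn.pos.ne'
  obtain ⟨m, hm⟩ := hn
  have hcast : ∀ j ∈ Icc 1 m, 1 / Real.sin (Real.pi * (2 * (j : ℝ) - 1) / n) ^ 2 =
      1 / Real.sin (Real.pi * (2 * j - 1 : ℕ) / n) ^ 2 := by
    intro j hj
    rw [Nat.cast_sub (by grind)]
    push_cast
    rfl
  have hreflect : ∀ k ∈ Ico 1 (2 * m + 1), 1 / Real.sin (Real.pi * (2 * m + 1 - k : ℕ) / n) ^ 2 =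
      1 / Real.sin (Real.pi * k / n) ^ 2 := by
    intro k hk
    rw [← hm, sin_pi_mul_sub_div hn0 (by grind)]
  have hhalf :=
    sum_Ico_one_eq_two_nsmul_sum_odd (f := fun k ↦ 1 / Real.sin (Real.pi * k / n) ^ 2) hreflect
  rw [← hm, sum_Ico_one_div_sin_sq hn0, two_nsmul] at hhalf
  rw [show (n - 1) / 2 = m by lia, sum_congr rfl hcast]
  linarith

end Trigonometric

/-- with `h_j = 4 sin(π(2j-1)/n) cos(π/n)` and `w_j = 2 sin(π(2j-1)/n) sin(π/n)`,
for odd `n ≥ 5` one has `∑_{j=1}^{(n-1)/2} 1/(h_j w_j) = (n² - 1)/(48 sin(π/n) cos(π/n))`. -/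
theorem sum_inv_height_width (n : ℕ) (hodd : Odd n) (hn : 5 ≤ n) :
    ∑ j ∈ Finset.Icc 1 ((n - 1) / 2),
        1 / ((4 * Real.sin (Real.pi * (2 * (j : ℝ) - 1) / n) * Real.cos (Real.pi / n)) *
            (2 * Real.sin (Real.pi * (2 * (j : ℝ) - 1) / n) * Real.sin (Real.pi / n))) =
      ((n : ℝ) ^ 2 - 1) / (48 * Real.sin (Real.pi / n) * Real.cos (Real.pi / n)) := by
  have hterm (s : ℝ) : 1 / (4 * s * Real.cos (Real.pi / n) * (2 * s * Real.sin (Real.pi / n))) =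
      1 / s ^ 2 / (8 * Real.sin (Real.pi / n) * Real.cos (Real.pi / n)) := by
    rw [div_div]
    ring_nf
  simp_rw [hterm]
  rw [← Finset.sum_div, sum_odd_one_div_sin_sq_of_odd hodd, div_div]
  ring_nf
end
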